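/- Under assumption (B2), let (wₙ)ₙ be a sequence of words in 𝒲 with |wₙ| → ∞. Then the limit lim_{n→∞} k(u,wₙ) exists for every u ∈ 𝒲 if and only if the limit lim_{n→∞} k_hom(u,wₙ) exists for every u ∈ 𝒲. (In particular, every ρ-Cauchy sequence is a ρ_hom-Cauchy sequence and vice versa.) -/

import Mathlib

open Classical

namespace Martin

/-- Finite words over the alphabet `Fin N` (the empty list is the empty word `∅`;
`w ++ [i]` is the word `wi` and `w.dropLast` is the parent `w⁻`). -/
abbrev Word (N : ℕ) := List (Fin N)

/-- The mass of a word: `m(w₁⋯wₙ) = m(w₁)⋯m(wₙ)`, `m(∅) = 1`. -/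
noncomputable def mW {N : ℕ} (m : Fin N → ℝ) (w : Word N) : ℝ := (w.map m).prod

/-- Total mass of the equivalence class of `v`: `Σ_{v̂ ∼ v} m(v̂)`. -/
noncomputable def massCl {N : ℕ} (sim : Word N → Word N → Prop) (m : Fin N → ℝ)
    (v : Word N) : ℝ :=
  ∑ᶠ u ∈ {u : Word N | sim u v}, mW m u

/-- Transition probability: `p(v,w) = m(w)/(Σ_{v̂∼v} m(v̂))` if `w = v̂i` for some
`v̂ ∼ v`, `i ∈ 𝒜`, and `0` otherwise. -/
noncomputable def pTrans {N : ℕ} (sim : Word N → Word N → Prop) (m : Fin N → ℝ)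
    (v w : Word N) : ℝ :=
  if ∃ v' : Word N, ∃ i : Fin N, sim v' v ∧ w = v' ++ [i] then mW m w / massCl sim m v
  else 0

/-- `n`-step transition probabilities: `p₀(v,w) = δ_v(w)`,
`pₙ(v,w) = Σ_u pₙ₋₁(v,u) p(u,w)`. -/
noncomputable def pn {N : ℕ} (sim : Word N → Word N → Prop) (m : Fin N → ℝ) :
    ℕ → Word N → Word N → ℝ
  | 0, v, w => if w = v then 1 else 0
  | n + 1, v, w => ∑ᶠ u : Word N, pn sim m n v u * pTrans sim m u w

/-- The Green function `g(v,w) = p_{|w|−|v|}(v,w)` (it equals `0` when `|w| < |v|`,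
by truncated subtraction and since then `v ≠ w`). -/
noncomputable def green {N : ℕ} (sim : Word N → Word N → Prop) (m : Fin N → ℝ)
    (v w : Word N) : ℝ :=
  pn sim m (w.length - v.length) v w

/-- The function `q(v,w) = g(v,w)·(Σ_{v̂∼v} m(v̂))/m(w)` for `v ≠ w`, `q(v,v) = 1`. -/
noncomputable def qfun {N : ℕ} (sim : Word N → Word N → Prop) (m : Fin N → ℝ)
    (v w : Word N) : ℝ :=
  if v = w then 1 else green sim m v w * massCl sim m v / mW m w

/-- The Martin kernel `k(v,w) = g(v,w)/g(∅,w)`. -/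
noncomputable def mkernel {N : ℕ} (sim : Word N → Word N → Prop) (m : Fin N → ℝ)
    (v w : Word N) : ℝ :=
  green sim m v w / green sim m [] w

/-- `R(w)`: the number of words equivalent to `w`. -/
noncomputable def Rnum {N : ℕ} (sim : Word N → Word N → Prop) (w : Word N) : ℕ :=
  Set.ncard {u : Word N | sim u w}

/-- Assumption (B2): for every word `w`, either all equivalent words have the same mass,
or all equivalent words have equivalent parents. -/
def B2 {N : ℕ} (sim : Word N → Word N → Prop) (m : Fin N → ℝ) : Prop :=
  ∀ w : Word N, (∀ w', sim w' w → mW m w' = mW m w) ∨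
    (∀ w', sim w' w → sim w'.dropLast w.dropLast)

/-!
The function `q(v,w)` does not depend on `m`. For `|w| ≤ |v| + 1` it is the indicator of `v = w` or
of `v ∼ w⁻`. For longer words, the last step of the walk exhibits `q(v,w)` as the `m`-weighted
average of `q(v,·)` over the class of the parent `w⁻`. By (B2), on that class either the weights
are constant, or the parents are equivalent and `q(v,·)` is constant, since `q(v,u)` depends only
on the class of `u⁻`; in both cases the average equals the uniform one, which no longer involves
`m`.

Since `g(∅,w) = m(w)`, the Martin kernel is `k(v,w) = q(v,w) / Σ_{v̂∼v} m(v̂)` for `v ≠ w`, so for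
fixed `v` two mass distributions give kernels that differ only by a constant factor.
-/

open Filter Finset
open scoped BigOperators Topology

theorem centerMass_eq_expect_of_const_or_const {R E ι : Type*} [Field R] [AddCommGroup E]
    [Module R E] [Module ℚ≥0 E] {s : Finset ι} {f : ι → R} {z : ι → E} (hf : ∑ i ∈ s, f i ≠ 0)
    (h : (∃ c, ∀ i ∈ s, f i = c) ∨ ∃ e, ∀ i ∈ s, z i = e) :
    s.centerMass f z = 𝔼 i ∈ s, z i := by
  rcases h with ⟨c, hc⟩ | ⟨e, he⟩
  · have hc0 : c ≠ 0 := by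
      rintro rfl
      exact hf (sum_eq_zero hc)
    calc s.centerMass f z = s.centerMass (c • fun _ => (1 : R)) z :=
          centerMass_congr_weights fun i hi => by simp [hc i hi]
      _ = s.centerMass (fun _ => (1 : R)) z := centerMass_smul_left s z hc0
      _ = 𝔼 i ∈ s, z i := by simp [centerMass, expect, inv_natCast_smul_eq R ℚ≥0]
  · calc s.centerMass f z = s.centerMass f fun _ => e := centerMass_congr_fun fun i hi _ => he i hi
      _ = e := centerMass_const hf e
      _ = 𝔼 i ∈ s, z i := by
          rw [expect_congr rfl he, expect_const (nonempty_of_sum_ne_zero hf)]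

section

variable {N : ℕ} {sim : Word N → Word N → Prop} {m m' : Fin N → ℝ} {u v w : Word N}

theorem mW_pos (hm : ∀ a, 0 < m a) (w : Word N) : 0 < mW m w :=
  List.prod_pos <| List.forall_mem_map.2 fun a _ => hm a

theorem green_of_length_le (sim : Word N → Word N → Prop) (m : Fin N → ℝ)
    (h : w.length ≤ v.length) : green sim m v w = if w = v then 1 else 0 := by
  rw [green, Nat.sub_eq_zero_of_le h, pn]

theorem qfun_of_ne (sim : Word N → Word N → Prop) (m : Fin N → ℝ) (h : v ≠ w) :
    qfun sim m v w = green sim m v w * massCl sim m v / mW m w :=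
  if_neg h

theorem qfun_of_length_le (sim : Word N → Word N → Prop) (m : Fin N → ℝ)
    (h : w.length ≤ v.length) : qfun sim m v w = if v = w then 1 else 0 := by
  by_cases hvw : v = w
  · simp [qfun, hvw]
  · simp [qfun, hvw, green_of_length_le sim m h, Ne.symm hvw]

/-- The equivalence class of `w` as a finset. Restricting to words of the same length as `w`
makes it finite for every `sim`, and changes nothing when `sim` preserves lengths. -/
noncomputable def simClass (sim : Word N → Word N → Prop) (w : Word N) : Finset (Word N) :=
  {u ∈ (List.finite_length_eq (Fin N) w.length).toFinset | sim u w}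

variable (hlen : ∀ v w : Word N, sim v w → v.length = w.length)
include hlen

theorem B2_const (c : ℝ) : B2 sim fun _ => c :=
  fun w => Or.inl fun w' h => by simp [mW, hlen w' w h]

theorem mem_simClass : u ∈ simClass sim w ↔ sim u w := by
  simpa [simClass] using hlen u w

theorem length_lt_of_mem_simClass_dropLast (hw : w ≠ []) (hu : u ∈ simClass sim w.dropLast) :
    u.length < w.length := by
  have := hlen u _ ((mem_simClass hlen).1 hu)
  have := List.length_pos_iff.2 hw
  simp only [List.length_dropLast] at *
  omega

theorem massCl_eq_sum (m : Fin N → ℝ) (w : Word N) :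
    massCl sim m w = ∑ u ∈ simClass sim w, mW m u :=
  finsum_mem_eq_sum_of_inter_support_eq _ (by ext; simp [mem_simClass hlen])

variable (hsim : Equivalence sim)
include hsim

theorem simClass_congr (h : sim v w) : simClass sim v = simClass sim w := by
  ext u
  simp only [mem_simClass hlen]
  exact ⟨fun huv => hsim.trans huv h, fun huw => hsim.trans huw (hsim.symm h)⟩

theorem massCl_congr (m : Fin N → ℝ) (h : sim v w) : massCl sim m v = massCl sim m w := by
  rw [massCl_eq_sum hlen, massCl_eq_sum hlen, simClass_congr hlen hsim h]

theorem pTrans_eq_ite (m : Fin N → ℝ) (v : Word N) (hw : w ≠ []) :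
    pTrans sim m v w = if sim v w.dropLast then mW m w / massCl sim m w.dropLast else 0 := by
  have hiff : (∃ v' : Word N, ∃ i : Fin N, sim v' v ∧ w = v' ++ [i]) ↔ sim v w.dropLast := by
    constructor
    · rintro ⟨v', i, h, rfl⟩
      simpa using hsim.symm h
    · exact fun h => ⟨_, _, hsim.symm h, (List.dropLast_append_getLast hw).symm⟩
  simp only [pTrans, hiff]
  exact if_ctx_congr Iff.rfl (fun h => by rw [massCl_congr hlen hsim m h]) fun _ => rfl

theorem green_of_length_lt (m : Fin N → ℝ) (h : v.length < w.length) :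
    green sim m v w =
      (∑ u ∈ simClass sim w.dropLast, green sim m v u) * (mW m w / massCl sim m w.dropLast) := by
  have hw : w ≠ [] := List.ne_nil_of_length_pos (by omega)
  rw [green, show w.length - v.length = (w.dropLast.length - v.length) + 1 by
    rw [List.length_dropLast]
    omega, pn,
    finsum_eq_sum_of_support_subset (s := simClass sim w.dropLast), sum_mul]
  · refine sum_congr rfl fun u hu => ?_
    have hu' := (mem_simClass hlen).1 hu
    rw [pTrans_eq_ite hlen hsim m u hw, if_pos hu', green, hlen u _ hu']
  · refine Function.support_subset_iff'.2 fun u hu => ?_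
    rw [mem_coe, mem_simClass hlen] at hu
    rw [pTrans_eq_ite hlen hsim m u hw, if_neg hu, mul_zero]

variable (hm : ∀ a, 0 < m a)
include hm

theorem massCl_pos (w : Word N) : 0 < massCl sim m w := by
  rw [massCl_eq_sum hlen]
  exact sum_pos (fun u _ => mW_pos hm u) ⟨w, (mem_simClass hlen).2 (hsim.refl w)⟩

theorem green_nil_left (w : Word N) : green sim m [] w = mW m w := by
  rcases eq_or_ne w [] with rfl | hw
  · simp [green_of_length_le, mW]
  · have ih : ∀ u ∈ simClass sim w.dropLast, green sim m [] u = mW m u := fun u hu =>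
      have := length_lt_of_mem_simClass_dropLast hlen hw hu
      green_nil_left u
    rw [green_of_length_lt hlen hsim m (by simpa [List.length_pos_iff]), sum_congr rfl ih,
      ← massCl_eq_sum hlen, mul_div_cancel₀ _ (massCl_pos hlen hsim hm _).ne']
termination_by w.length

theorem qfun_of_length_lt (h : v.length < w.length) :
    qfun sim m v w =
      (∑ u ∈ simClass sim w.dropLast, green sim m v u) * massCl sim m v /
        massCl sim m w.dropLast := by
  have := (mW_pos hm w).ne'
  rw [qfun_of_ne sim m (by rintro rfl; exact h.false), green_of_length_lt hlen hsim m h]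
  field_simp

theorem qfun_congr_of_sim_dropLast (hu : v.length < u.length) (hw : v.length < w.length)
    (h : sim u.dropLast w.dropLast) : qfun sim m v u = qfun sim m v w := by
  rw [qfun_of_length_lt hlen hsim hm hu, qfun_of_length_lt hlen hsim hm hw,
    simClass_congr hlen hsim h, massCl_congr hlen hsim m h]

theorem qfun_of_length_eq_add_one (h : w.length = v.length + 1) :
    qfun sim m v w = if sim v w.dropLast then 1 else 0 := by
  have hgreen : ∀ u ∈ simClass sim w.dropLast, green sim m v u = if u = v then 1 else 0 :=
    fun u hu => green_of_length_le sim m <| by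
      simp [hlen u _ ((mem_simClass hlen).1 hu), h]
  rw [qfun_of_length_lt hlen hsim hm (by omega), sum_congr rfl hgreen, sum_ite_eq']
  simp only [mem_simClass hlen]
  split_ifs with hv
  · rw [one_mul, massCl_congr hlen hsim m hv, div_self (massCl_pos hlen hsim hm _).ne']
  · simp

theorem qfun_eq_centerMass (h : v.length + 1 < w.length) :
    qfun sim m v w = (simClass sim w.dropLast).centerMass (mW m) (qfun sim m v) := by
  have hgreen : ∀ u ∈ simClass sim w.dropLast,
      green sim m v u * massCl sim m v = mW m u * qfun sim m v u := by
    intro u hu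
    have hvu : v ≠ u := by
      rintro rfl
      have := hlen v _ ((mem_simClass hlen).1 hu)
      rw [List.length_dropLast] at this
      omega
    rw [qfun_of_ne sim m hvu, mul_div_cancel₀ _ (mW_pos hm u).ne']
  rw [qfun_of_length_lt hlen hsim hm (by omega), sum_mul, sum_congr rfl hgreen, centerMass,
    ← massCl_eq_sum hlen, smul_eq_mul, inv_mul_eq_div]
  simp only [smul_eq_mul]

theorem qfun_eq_expect (hB2 : B2 sim m) (h : v.length + 1 < w.length) :
    qfun sim m v w = 𝔼 u ∈ simClass sim w.dropLast, qfun sim m v u := by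
  rw [qfun_eq_centerMass hlen hsim hm h]
  have hmass_ne : ∑ u ∈ simClass sim w.dropLast, mW m u ≠ 0 :=
    massCl_eq_sum hlen m w.dropLast ▸ (massCl_pos hlen hsim hm _).ne'
  refine centerMass_eq_expect_of_const_or_const hmass_ne ?_
  have hw : v.length < w.dropLast.length := by
    rw [List.length_dropLast]
    omega
  refine (hB2 w.dropLast).imp (fun hmass => ?_) fun hparent => ?_
  · exact ⟨mW m w.dropLast, fun u hu => hmass u ((mem_simClass hlen).1 hu)⟩
  · refine ⟨qfun sim m v w.dropLast, fun u hu => ?_⟩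
    have hu' := (mem_simClass hlen).1 hu
    exact qfun_congr_of_sim_dropLast hlen hsim hm (hlen u _ hu' ▸ hw) hw (hparent u hu')

theorem mkernel_eq_qfun_div_massCl (h : v ≠ w) :
    mkernel sim m v w = qfun sim m v w / massCl sim m v := by
  have := (massCl_pos hlen hsim hm v).ne'
  rw [mkernel, green_nil_left hlen hsim hm, qfun_of_ne sim m h]
  field_simp

variable (hm' : ∀ a, 0 < m' a) (hB2 : B2 sim m) (hB2' : B2 sim m')
include hm' hB2 hB2'

theorem qfun_eq_qfun (v w : Word N) : qfun sim m v w = qfun sim m' v w := by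
  rcases lt_trichotomy w.length (v.length + 1) with h | h | h
  · rw [qfun_of_length_le sim m (by omega), qfun_of_length_le sim m' (by omega)]
  · rw [qfun_of_length_eq_add_one hlen hsim hm h, qfun_of_length_eq_add_one hlen hsim hm' h]
  · rw [qfun_eq_expect hlen hsim hm hB2 h, qfun_eq_expect hlen hsim hm' hB2' h]
    refine expect_congr rfl fun u hu => ?_
    have := length_lt_of_mem_simClass_dropLast hlen (List.ne_nil_of_length_pos (by omega)) hu
    exact qfun_eq_qfun v u
termination_by w.length

theorem mkernel_eq_massCl_div_mul (h : v ≠ w) :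
    mkernel sim m' v w = massCl sim m v / massCl sim m' v * mkernel sim m v w := by
  have := (massCl_pos hlen hsim hm v).ne'
  rw [mkernel_eq_qfun_div_massCl hlen hsim hm h, mkernel_eq_qfun_div_massCl hlen hsim hm' h,
    qfun_eq_qfun hlen hsim hm hm' hB2 hB2' v w]
  field_simp

theorem exists_tendsto_mkernel_of_exists_tendsto_mkernel {ι : Type*} {l : Filter ι}
    {w : ι → Word N} (hw : ∀ᶠ i in l, u ≠ w i)
    (h : ∃ L : ℝ, Tendsto (fun i => mkernel sim m u (w i)) l (𝓝 L)) :
    ∃ L : ℝ, Tendsto (fun i => mkernel sim m' u (w i)) l (𝓝 L) := by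
  obtain ⟨L, hL⟩ := h
  refine ⟨_, (hL.const_mul (massCl sim m u / massCl sim m' u)).congr' ?_⟩
  filter_upwards [hw] with i hi
  exact (mkernel_eq_massCl_div_mul hlen hsim hm hm' hB2 hB2' hi).symm

end

theorem cauchy_iff_cauchy_hom_general {N : ℕ} {sim : Word N → Word N → Prop}
    {m m' : Fin N → ℝ} (hsim : Equivalence sim)
    (hlen : ∀ v w : Word N, sim v w → v.length = w.length) (hm : ∀ a, 0 < m a)
    (hm' : ∀ a, 0 < m' a) (hB2 : B2 sim m) (hB2' : B2 sim m') {ι : Type*} {l : Filter ι}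
    {w : ι → Word N} (hw : Tendsto (fun i => (w i).length) l atTop) (u : Word N) :
    (∃ L : ℝ, Tendsto (fun i => mkernel sim m u (w i)) l (𝓝 L)) ↔
      ∃ L : ℝ, Tendsto (fun i => mkernel sim m' u (w i)) l (𝓝 L) := by
  have hne : ∀ᶠ i in l, u ≠ w i :=
    (hw.eventually_gt_atTop u.length).mono fun i hi h => hi.ne (congrArg List.length h)
  exact ⟨exists_tendsto_mkernel_of_exists_tendsto_mkernel hlen hsim hm hm' hB2 hB2' hne,
    exists_tendsto_mkernel_of_exists_tendsto_mkernel hlen hsim hm' hm hB2' hB2 hne⟩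

/-- Lemma 5.2: under (B2), for a sequence of words with lengths tending
to infinity, the limits `lim_n k(u,wₙ)` exist for all `u` iff the limits
`lim_n k_hom(u,wₙ)` exist for all `u`. -/
theorem cauchy_iff_cauchy_hom {N : ℕ} (hN : 2 ≤ N)
    (sim : Word N → Word N → Prop) (hsim : Equivalence sim)
    (hlen : ∀ v w : Word N, sim v w → v.length = w.length)
    (m : Fin N → ℝ) (hm : ∀ a, m a ∈ Set.Ioo (0 : ℝ) 1)
    (hm1 : ∑ a, m a = 1) (hB2 : B2 sim m) :
    ∀ w : ℕ → Word N,
      Filter.Tendsto (fun n => (w n).length) Filter.atTop Filter.atTop →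
      ((∀ u : Word N, ∃ L : ℝ,
          Filter.Tendsto (fun n => mkernel sim m u (w n)) Filter.atTop (nhds L)) ↔
       (∀ u : Word N, ∃ L : ℝ,
          Filter.Tendsto (fun n => mkernel sim (fun _ : Fin N => (N : ℝ)⁻¹) u (w n))
            Filter.atTop (nhds L))) := by
  intro w hw
  exact forall_congr' <| cauchy_iff_cauchy_hom_general hsim hlen (fun a => (hm a).1)
    (fun _ => inv_pos.2 (Nat.cast_pos.2 (by omega))) hB2 (B2_const hlen _) hw

end Martin
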